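/- arXiv:1005.2401 — 4 statements merged into one kernel-verified Lean document; each statement's English description precedes it below -/
import Mathlib

section
/- Let E be a uniformly convex Banach space. Then there exists a function σ : [0,∞) → [0,∞) with σ(x) > 0 for every x > 0 and lim_{x→0⁺} σ(x) = 0, such that for all vectors v, w ∈ E with v ≠ 0 satisfying ‖v + (1/2)w‖ ≥ ‖v‖, one has ‖v + w‖ ≥ ‖v‖ · (1 + σ(‖w‖/(‖v‖ + ‖w‖))). -/
open Filter Topology

/-!
Put `r = ‖v + w‖`. Since `2‖v‖ ≤ ‖v + (v + w)‖`, both `v` and `v + w` lie in the closed ball of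
radius `r`, and they are at distance `‖w‖ ≥ t r` for `t = ‖w‖ / (‖v‖ + ‖w‖)`. Uniform convexity,
rescaled to this ball, gives `2‖v‖ ≤ (2 - δ(t)) r`, so `‖v‖ (1 + δ(t) / 2) ≤ r`. Every smaller
constant works as well, so `σ(t)` may be taken at most `t`, which forces `σ(t) → 0` as `t → 0⁺`.
-/

theorem exists_tendsto_zero_of_forall_exists_pos {P : ℝ → ℝ → Prop} (hanti : ∀ x, Antitone (P x))
    (hzero : P 0 0) (hpos : ∀ x, 0 < x → ∃ d, 0 < d ∧ P x d) :
    ∃ σ : ℝ → ℝ,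
      (∀ x, 0 ≤ x → 0 ≤ σ x) ∧
      (∀ x, 0 < x → 0 < σ x) ∧
      Tendsto σ (𝓝[>] 0) (𝓝 0) ∧
      ∀ x, 0 ≤ x → P x (σ x) := by
  choose! δ hδ hPδ using hpos
  -- The absolute value only serves to make `σ 0 = 0`, whatever the arbitrary value `δ 0` is.
  let σ : ℝ → ℝ := fun x ↦ min |δ x| x
  have σ_nonneg : ∀ x, 0 ≤ x → 0 ≤ σ x := fun x hx ↦ le_min (abs_nonneg _) hx
  refine ⟨σ, σ_nonneg, fun x hx ↦ lt_min (abs_pos.2 (hδ x hx).ne') hx, ?_, fun x hx ↦ ?_⟩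
  · refine tendsto_of_tendsto_of_tendsto_of_le_of_le' tendsto_const_nhds
      (tendsto_id.mono_left nhdsWithin_le_nhds) ?_ (.of_forall fun x ↦ min_le_right _ _)
    filter_upwards [self_mem_nhdsWithin] with x hx using σ_nonneg x (le_of_lt hx)
  · rcases hx.eq_or_lt with rfl | hx
    · simpa [σ] using hzero
    · exact hanti x ((min_le_left _ _).trans (abs_of_pos (hδ x hx)).le) (hPδ x hx)

section Seminormed

variable {E : Type*} [SeminormedAddCommGroup E]

theorem norm_div_norm_add_norm_mul_le (v w : E) : ‖w‖ / (‖v‖ + ‖w‖) * ‖v + w‖ ≤ ‖w‖ :=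
  calc ‖w‖ / (‖v‖ + ‖w‖) * ‖v + w‖ = ‖w‖ * (‖v + w‖ / (‖v‖ + ‖w‖)) := by ring
    _ ≤ ‖w‖ := mul_le_of_le_one_right (norm_nonneg w)
      (div_le_one_of_le₀ (norm_add_le v w) (by positivity))

variable [NormedSpace ℝ E]

variable (E) in
theorem exists_forall_norm_add_le_two_sub_mul [UniformConvexSpace E] {ε : ℝ} (hε : 0 < ε) :
    ∃ δ, 0 < δ ∧ ∀ ⦃r : ℝ⦄ ⦃x y : E⦄, ‖x‖ ≤ r → ‖y‖ ≤ r → ε * r ≤ ‖x - y‖ →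
      ‖x + y‖ ≤ (2 - δ) * r := by
  obtain ⟨δ, hδ, hball⟩ := exists_forall_closed_ball_dist_add_le_two_sub E hε
  refine ⟨δ, hδ, fun r x y hx hy hxy ↦ ?_⟩
  rcases ((norm_nonneg x).trans hx).eq_or_lt with rfl | hr
  · linarith [norm_add_le x y]
  have norm_inv_smul (u : E) : ‖r⁻¹ • u‖ = ‖u‖ / r := by
    rw [norm_smul, norm_inv, Real.norm_of_nonneg hr.le, inv_mul_eq_div]
  have hscaled : ‖r⁻¹ • x + r⁻¹ • y‖ ≤ 2 - δ := by
    apply hball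
    · rwa [norm_inv_smul, div_le_one hr]
    · rwa [norm_inv_smul, div_le_one hr]
    · rwa [← smul_sub, norm_inv_smul, le_div_iff₀ hr]
  rwa [← smul_add, norm_inv_smul, div_le_iff₀ hr] at hscaled

theorem two_mul_norm_le_norm_add_add {v w : E} (h : ‖v‖ ≤ ‖v + (1 / 2 : ℝ) • w‖) :
    2 * ‖v‖ ≤ ‖v + (v + w)‖ :=
  calc 2 * ‖v‖ ≤ 2 * ‖v + (1 / 2 : ℝ) • w‖ := by gcongr
    _ = ‖(2 : ℝ) • (v + (1 / 2 : ℝ) • w)‖ := by rw [norm_smul, Real.norm_two]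
    _ = ‖v + (v + w)‖ := by congr 1; module

theorem norm_le_norm_add_of_norm_le_norm_add_half {v w : E}
    (h : ‖v‖ ≤ ‖v + (1 / 2 : ℝ) • w‖) : ‖v‖ ≤ ‖v + w‖ := by
  linarith [two_mul_norm_le_norm_add_add h, norm_add_le v (v + w)]

variable (E) in
/-- `s` is a growth rate of the norm of `E` at relative step size `t`: if moving from `v` by half
of `w` does not decrease the norm, then moving by all of `w` multiplies it by at least `1 + s`,
as soon as `‖w‖ ≥ t ‖v + w‖`. Measuring `w` against `‖v + w‖` instead of `‖v‖ + ‖w‖` only enlarges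
the set of admissible steps, and avoids the division. -/
def IsNormGrowthRate (t s : ℝ) : Prop :=
  ∀ ⦃v w : E⦄, ‖v‖ ≤ ‖v + (1 / 2 : ℝ) • w‖ → t * ‖v + w‖ ≤ ‖w‖ → ‖v‖ * (1 + s) ≤ ‖v + w‖

theorem antitone_isNormGrowthRate (t : ℝ) : Antitone (IsNormGrowthRate E t) := by
  intro s s' hs hs' v w hhalf hw
  calc ‖v‖ * (1 + s) ≤ ‖v‖ * (1 + s') := by gcongr
    _ ≤ ‖v + w‖ := hs' hhalf hw

theorem isNormGrowthRate_zero_right (t : ℝ) : IsNormGrowthRate E t 0 := fun v w hhalf _ ↦ by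
  simpa using norm_le_norm_add_of_norm_le_norm_add_half hhalf

theorem exists_pos_isNormGrowthRate [UniformConvexSpace E] {t : ℝ} (ht : 0 < t) :
    ∃ s, 0 < s ∧ IsNormGrowthRate E t s := by
  obtain ⟨δ, hδ, hconvex⟩ := exists_forall_norm_add_le_two_sub_mul E ht
  refine ⟨δ / 2, half_pos hδ, fun v w hhalf hw ↦ ?_⟩
  have hsum : ‖v + (v + w)‖ ≤ (2 - δ) * ‖v + w‖ :=
    hconvex (norm_le_norm_add_of_norm_le_norm_add_half hhalf) le_rfl (by simpa using hw)
  have hv : ‖v‖ ≤ (1 - δ / 2) * ‖v + w‖ := by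
    linarith [two_mul_norm_le_norm_add_add hhalf]
  calc ‖v‖ * (1 + δ / 2) ≤ (1 - δ / 2) * ‖v + w‖ * (1 + δ / 2) := by gcongr
    _ = ‖v + w‖ - (δ / 2) ^ 2 * ‖v + w‖ := by ring
    _ ≤ ‖v + w‖ := sub_le_self _ (by positivity)

end Seminormed

theorem reverse_khasminskii_uniform_convexity_lemma_general
    (E : Type*) [SeminormedAddCommGroup E] [NormedSpace ℝ E] [UniformConvexSpace E] :
    ∃ σ : ℝ → ℝ,
      (∀ x, 0 ≤ x → 0 ≤ σ x) ∧
      (∀ x, 0 < x → 0 < σ x) ∧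
      Tendsto σ (𝓝[>] (0 : ℝ)) (𝓝 0) ∧
      ∀ v w : E, ‖v‖ ≤ ‖v + (1 / 2 : ℝ) • w‖ →
        ‖v‖ * (1 + σ (‖w‖ / (‖v‖ + ‖w‖))) ≤ ‖v + w‖ := by
  obtain ⟨σ, hnonneg, hpos, hlim, hrate⟩ := exists_tendsto_zero_of_forall_exists_pos
    (antitone_isNormGrowthRate (E := E)) (isNormGrowthRate_zero_right 0)
    fun _ ht ↦ exists_pos_isNormGrowthRate ht
  exact ⟨σ, hnonneg, hpos, hlim, fun v w hhalf ↦
    hrate _ (by positivity) hhalf (norm_div_norm_add_norm_mul_le v w)⟩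

/-- Lemma about uniformly convex Banach spaces (Lemma `lemma_*` in the paper):
there is a function `σ : [0,∞) → [0,∞)`, positive on `(0,∞)` and tending to `0` at `0`,
such that whenever `‖v + (1/2)w‖ ≥ ‖v‖` (and `v ≠ 0`) one has
`‖v + w‖ ≥ ‖v‖ (1 + σ(‖w‖/(‖v‖+‖w‖)))`. -/
theorem reverse_khasminskii_uniform_convexity_lemma
    (E : Type*) [NormedAddCommGroup E] [NormedSpace ℝ E]
    [UniformConvexSpace E] [CompleteSpace E] :
    ∃ σ : ℝ → ℝ,
      (∀ x, 0 ≤ x → 0 ≤ σ x) ∧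
      (∀ x, 0 < x → 0 < σ x) ∧
      Tendsto σ (𝓝[>] (0 : ℝ)) (𝓝 0) ∧
      ∀ v w : E, v ≠ 0 → ‖v‖ ≤ ‖v + (1 / 2 : ℝ) • w‖ →
        ‖v‖ * (1 + σ (‖w‖ / (‖v‖ + ‖w‖))) ≤ ‖v + w‖ := by
  obtain ⟨σ, hnonneg, hpos, hlim, hσ⟩ := reverse_khasminskii_uniform_convexity_lemma_general E
  exact ⟨σ, hnonneg, hpos, hlim, fun v w _ ↦ hσ v w⟩
end

section
/- Let E be a uniformly convex Banach space. Then for every ε > 0 there exists a constant c > 0 such that for all v, w ∈ E satisfying ‖v + (1/2)w‖ ≥ ‖v‖ and ‖w‖ ≥ ε · (‖v‖ + ‖w‖), one has ‖v + w‖ ≥ (1 + c) · ‖v‖. -/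
/-!
Put `x = v` and `y = v + w`, and let `r = max ‖x‖ ‖y‖`. Since `r ≤ ‖v‖ + ‖w‖`, the vectors `x` and
`y` lie in the ball of radius `r` at distance at least `ε * r`, so uniform convexity at scale `r`
gives `2 * ‖x‖ ≤ ‖x + y‖ ≤ (2 - δ) * r`. Hence `(1 + δ / 2) * ‖x‖ ≤ (1 - (δ / 2) ^ 2) * r ≤ r`,
and unless `‖x‖ = 0` this forces the maximum `r` to be `‖y‖`.
-/

section UniformConvex

variable (E : Type*) [SeminormedAddCommGroup E] [NormedSpace ℝ E] [UniformConvexSpace E] {ε : ℝ}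

theorem exists_forall_closed_ball_dist_add_le_two_sub_mul (hε : 0 < ε) :
    ∃ δ, 0 < δ ∧ ∀ ⦃r : ℝ⦄ ⦃x : E⦄, ‖x‖ ≤ r → ∀ ⦃y⦄, ‖y‖ ≤ r → ε * r ≤ ‖x - y‖ →
      ‖x + y‖ ≤ (2 - δ) * r := by
  obtain ⟨δ, hδ, unit_ball⟩ := exists_forall_closed_ball_dist_add_le_two_sub E hε
  refine ⟨δ, hδ, fun r x hx y hy hxy ↦ ?_⟩
  obtain rfl | hr := ((norm_nonneg x).trans hx).eq_or_lt
  · simpa using norm_add_le_of_le hx hy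
  have norm_rescale (z : E) : ‖r⁻¹ • z‖ = ‖z‖ / r := by
    rw [norm_smul_of_nonneg (inv_nonneg.2 hr.le), inv_mul_eq_div]
  have rescaled : ‖r⁻¹ • x + r⁻¹ • y‖ ≤ 2 - δ := by
    apply unit_ball
    · rwa [norm_rescale, div_le_one hr]
    · rwa [norm_rescale, div_le_one hr]
    · rwa [← smul_sub, norm_rescale, le_div_iff₀ hr]
  rwa [← smul_add, norm_rescale, div_le_iff₀ hr] at rescaled

theorem exists_forall_one_add_mul_norm_le_of_two_mul_norm_le (hε : 0 < ε) :
    ∃ c, 0 < c ∧ ∀ ⦃x y : E⦄, 2 * ‖x‖ ≤ ‖x + y‖ → ε * max ‖x‖ ‖y‖ ≤ ‖x - y‖ →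
      (1 + c) * ‖x‖ ≤ ‖y‖ := by
  obtain ⟨δ, hδ, ball_of_radius⟩ := exists_forall_closed_ball_dist_add_le_two_sub_mul E hε
  refine ⟨δ / 2, half_pos hδ, fun x y hsum hdist ↦ ?_⟩
  have norm_add_le_max : ‖x + y‖ ≤ (2 - δ) * max ‖x‖ ‖y‖ :=
    ball_of_radius (le_max_left _ _) (le_max_right _ _) hdist
  have gain_le_max : (1 + δ / 2) * ‖x‖ ≤ max ‖x‖ ‖y‖ :=
    calc (1 + δ / 2) * ‖x‖
      _ ≤ (1 + δ / 2) * ((1 - δ / 2) * max ‖x‖ ‖y‖) := by gcongr; linarith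
      _ = max ‖x‖ ‖y‖ - (δ / 2) ^ 2 * max ‖x‖ ‖y‖ := by ring
      _ ≤ max ‖x‖ ‖y‖ := sub_le_self _ (by positivity)
  obtain gain_le_left | gain_le_right := le_max_iff.1 gain_le_max
  · have norm_x_eq_zero : ‖x‖ = 0 := by nlinarith [norm_nonneg x]
    simp [norm_x_eq_zero]
  · exact gain_le_right

theorem uniform_convexity_quantitative_gain_general (hε : 0 < ε) :
    ∃ c : ℝ, 0 < c ∧ ∀ v w : E,
      ‖v‖ ≤ ‖v + (1 / 2 : ℝ) • w‖ → ε * (‖v‖ + ‖w‖) ≤ ‖w‖ →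
      (1 + c) * ‖v‖ ≤ ‖v + w‖ := by
  obtain ⟨c, hc, gain⟩ := exists_forall_one_add_mul_norm_le_of_two_mul_norm_le E hε
  refine ⟨c, hc, fun v w hmid hw ↦ gain ?_ ?_⟩
  · calc 2 * ‖v‖
      _ ≤ 2 * ‖v + (1 / 2 : ℝ) • w‖ := by gcongr
      _ = ‖(2 : ℝ) • (v + (1 / 2 : ℝ) • w)‖ := (norm_smul_of_nonneg zero_le_two _).symm
      _ = ‖v + (v + w)‖ := by congr 1; module
  · calc ε * max ‖v‖ ‖v + w‖
      _ ≤ ε * (‖v‖ + ‖w‖) := by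
        gcongr
        exact max_le (le_add_of_nonneg_right (norm_nonneg w)) (norm_add_le v w)
      _ ≤ ‖w‖ := hw
      _ = ‖v - (v + w)‖ := by rw [sub_add_cancel_left, norm_neg]

end UniformConvex

/-- Quantitative version of the paper's uniform convexity lemma:
in a uniformly convex Banach space, for every `ε > 0` there is `c > 0` such that
`‖v + (1/2)w‖ ≥ ‖v‖` and `‖w‖ ≥ ε (‖v‖ + ‖w‖)` imply `‖v + w‖ ≥ (1 + c) ‖v‖`. -/
theorem uniform_convexity_quantitative_gain
    (E : Type*) [NormedAddCommGroup E] [NormedSpace ℝ E]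
    [UniformConvexSpace E] [CompleteSpace E]
    (ε : ℝ) (hε : 0 < ε) :
    ∃ c : ℝ, 0 < c ∧ ∀ v w : E,
      ‖v‖ ≤ ‖v + (1 / 2 : ℝ) • w‖ → ε * (‖v‖ + ‖w‖) ≤ ‖w‖ →
      (1 + c) * ‖v‖ ≤ ‖v + w‖ :=
  uniform_convexity_quantitative_gain_general E hε
end

section
/- Let E be a uniformly convex Banach space, let v ∈ E with v ≠ 0, and let (w_j) be a sequence in E such that ‖v + (1/2)w_j‖ ≥ ‖v‖ for every j and ‖v + w_j‖ → ‖v‖ as j → ∞. Then ‖w_j‖ → 0 as j → ∞. -/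
open Filter Topology

/-!
Put `r = ‖v‖`. The vectors `v + w j` and `v` have norms tending to `r`, and twice their midpoint,
`(v + w j) + v`, has norm at least `2 * r`, hence tending to `2 * r` by the triangle inequality.
After radial projection to the sphere of radius `r`, which changes `v + w j` only by
`|r - ‖v + w j‖|`, uniform convexity forces the difference `w j` of the two vectors to tend to `0`.
-/

section RadialProjection

variable {E : Type*} [SeminormedAddCommGroup E] [NormedSpace ℝ E]

lemma norm_div_norm_smul_le {r : ℝ} (hr : 0 ≤ r) (x : E) : ‖(r / ‖x‖) • x‖ ≤ r := by
  rw [norm_smul_of_nonneg (by positivity), div_mul_eq_mul_div, mul_div_assoc]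
  exact mul_le_of_le_one_right hr (div_self_le_one _)

lemma norm_div_norm_smul_sub_self_le (r : ℝ) (x : E) : ‖(r / ‖x‖) • x - x‖ ≤ |r - ‖x‖| := by
  obtain hx | hx := eq_or_ne ‖x‖ 0
  · simp [hx]
  · apply le_of_eq
    calc ‖(r / ‖x‖) • x - x‖ = ‖(r / ‖x‖ - 1) • x‖ := by rw [sub_smul, one_smul]
      _ = |(r / ‖x‖ - 1) * ‖x‖| := by rw [norm_smul, Real.norm_eq_abs, abs_mul, abs_norm]
      _ = |r - ‖x‖| := by rw [sub_one_mul, div_mul_cancel₀ r hx]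

lemma tendsto_div_norm_smul_sub_self {ι : Type*} {l : Filter ι} {x : ι → E} {r : ℝ}
    (hx : Tendsto (fun i ↦ ‖x i‖) l (𝓝 r)) :
    Tendsto (fun i ↦ (r / ‖x i‖) • x i - x i) l (𝓝 0) := by
  refine squeeze_zero_norm (fun i ↦ norm_div_norm_smul_sub_self_le r (x i)) ?_
  simpa using (hx.const_sub r).abs

end RadialProjection

section UniformConvexSpace

variable {E ι : Type*} [SeminormedAddCommGroup E] [NormedSpace ℝ E] [UniformConvexSpace E]
  {l : Filter ι} {x y : ι → E} {r : ℝ}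

lemma tendsto_sub_zero_of_norm_le_of_tendsto_norm_add
    (hx : ∀ᶠ i in l, ‖x i‖ ≤ r) (hy : ∀ᶠ i in l, ‖y i‖ ≤ r)
    (hxy : Tendsto (fun i ↦ ‖x i + y i‖) l (𝓝 (2 * r))) :
    Tendsto (fun i ↦ x i - y i) l (𝓝 0) := by
  rw [NormedAddGroup.tendsto_nhds_zero]
  intro ε hε
  obtain ⟨δ, hδ, norm_add_le_sub⟩ := exists_forall_closed_ball_dist_add_le_two_mul_sub E hε r
  filter_upwards [hx, hy, hxy.eventually_const_lt (sub_lt_self _ hδ)] with i hxi hyi hxyi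
  by_contra! hε_le
  exact hxyi.not_ge (norm_add_le_sub hxi hyi hε_le)

lemma tendsto_sub_zero_of_tendsto_norm_of_tendsto_norm_add
    (hx : Tendsto (fun i ↦ ‖x i‖) l (𝓝 r)) (hy : Tendsto (fun i ↦ ‖y i‖) l (𝓝 r))
    (hxy : Tendsto (fun i ↦ ‖x i + y i‖) l (𝓝 (2 * r))) :
    Tendsto (fun i ↦ x i - y i) l (𝓝 0) := by
  obtain rfl | _ := l.eq_or_neBot
  · exact tendsto_bot
  have hr : 0 ≤ r := ge_of_tendsto' hx fun i ↦ norm_nonneg (x i)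
  let x' i := (r / ‖x i‖) • x i
  let y' i := (r / ‖y i‖) • y i
  have hx' : Tendsto (fun i ↦ x' i - x i) l (𝓝 0) := tendsto_div_norm_smul_sub_self hx
  have hy' : Tendsto (fun i ↦ y' i - y i) l (𝓝 0) := tendsto_div_norm_smul_sub_self hy
  have add_close : Tendsto (fun i ↦ ‖x' i + y' i - (x i + y i)‖) l (𝓝 0) := by
    simpa only [add_sub_add_comm, add_zero, norm_zero] using (hx'.add hy').norm
  have hxy' : Tendsto (fun i ↦ ‖x' i + y' i‖) l (𝓝 (2 * r)) := by
    refine hxy.congr_dist (squeeze_zero (fun _ ↦ dist_nonneg) (fun i ↦ ?_) add_close)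
    rw [dist_comm]
    exact dist_norm_norm_le _ _
  have sub_tendsto : Tendsto (fun i ↦ x' i - y' i) l (𝓝 0) :=
    tendsto_sub_zero_of_norm_le_of_tendsto_norm_add
      (.of_forall fun i ↦ norm_div_norm_smul_le hr (x i))
      (.of_forall fun i ↦ norm_div_norm_smul_le hr (y i)) hxy'
  have sub_eq (i : ι) : x' i - y' i - ((x' i - x i) - (y' i - y i)) = x i - y i := by abel
  simpa [sub_eq] using sub_tendsto.sub (hx'.sub hy')

theorem norm_tendsto_zero_of_uniformConvex_general {v : E} {w : ι → E}
    (h1 : ∀ᶠ j in l, ‖v‖ ≤ ‖v + (1 / 2 : ℝ) • w j‖)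
    (h2 : Tendsto (fun j ↦ ‖v + w j‖) l (𝓝 ‖v‖)) :
    Tendsto (fun j ↦ ‖w j‖) l (𝓝 0) := by
  have le_norm_add : ∀ᶠ j in l, 2 * ‖v‖ ≤ ‖v + w j + v‖ := by
    filter_upwards [h1] with j hj
    calc 2 * ‖v‖ ≤ 2 * ‖v + (1 / 2 : ℝ) • w j‖ := by gcongr
      _ = ‖(2 : ℝ) • (v + (1 / 2 : ℝ) • w j)‖ := (norm_smul_of_nonneg zero_le_two _).symm
      _ = ‖v + w j + v‖ := by congr 1; module
  have norm_add_tendsto : Tendsto (fun j ↦ ‖v + w j + v‖) l (𝓝 (2 * ‖v‖)) := by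
    refine tendsto_of_tendsto_of_tendsto_of_le_of_le' tendsto_const_nhds ?_ le_norm_add
      (.of_forall fun j ↦ norm_add_le (v + w j) v)
    simpa only [two_mul] using h2.add_const ‖v‖
  simpa using (tendsto_sub_zero_of_tendsto_norm_of_tendsto_norm_add h2 tendsto_const_nhds
    norm_add_tendsto).norm

end UniformConvexSpace

/-- Convergence principle in uniformly convex Banach spaces used in the proof of the
reverse Khas'minskii condition: if `v ≠ 0`, `‖v + (1/2) w_j‖ ≥ ‖v‖` for every `j` and
`‖v + w_j‖ → ‖v‖`, then `‖w_j‖ → 0`. -/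
theorem norm_tendsto_zero_of_uniformConvex
    (E : Type*) [NormedAddCommGroup E] [NormedSpace ℝ E]
    [UniformConvexSpace E] [CompleteSpace E]
    (v : E) (hv : v ≠ 0) (w : ℕ → E)
    (h1 : ∀ j, ‖v‖ ≤ ‖v + (1 / 2 : ℝ) • w j‖)
    (h2 : Tendsto (fun j => ‖v + w j‖) atTop (𝓝 ‖v‖)) :
    Tendsto (fun j => ‖w j‖) atTop (𝓝 (0 : ℝ)) :=
  norm_tendsto_zero_of_uniformConvex_general (.of_forall h1) h2
end

section
/- Let X be a locally compact, σ-compact Hausdorff topological space, and let (f_m) be a sequence of continuous functions f_m : X → ℝ with 0 ≤ f_{m+1} ≤ f_m ≤ 1 pointwise, converging pointwise to 0, and such that for each m there is a compact set K_m ⊆ X with f_m = 1 on X \ K_m. Then there exists a strictly increasing sequence of indices m(1) < m(2) < ⋯ such that the series F(x) = ∑_{k=1}^∞ f_{m(k)}(x) converges locally uniformly on X, the resulting function F : X → ℝ is continuous, and F(x) → +∞ along the cocompact filter on X (i.e., for every M there is a compact set C with F ≥ M outside C). -/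
open Filter Topology

/-!
Choose compact sets `K n` with `f n ≥ c > 0` off `K n`. Each `x` satisfies `f j x < c` for some `j`,
and as `f` decreases, the open neighbourhood `{f j < c}` of `x` lies in `K n` for every `n ≥ j`. So
the `K n` already serve as a compact exhaustion. By Dini's theorem some subsequence satisfies
`f (m n) < 2⁻ⁿ` on `K n`, and near each point the Weierstrass M-test applies to its series. Off a
compact set the first `N` terms are all at least `c`, so the sum is at least `N * c` there.
-/

section Series

variable {X E : Type*}

lemma exists_strictMono_forall_norm_lt_of_tendstoUniformlyOn_zero [SeminormedAddGroup E]
    {f : ℕ → X → E} {s : ℕ → Set X} {u : ℕ → ℝ} (hu : ∀ n, 0 < u n)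
    (hf : ∀ n, TendstoUniformlyOn f 0 atTop (s n)) :
    ∃ m : ℕ → ℕ, StrictMono m ∧ ∀ n, ∀ x ∈ s n, ‖f (m n) x‖ < u n := by
  refine extraction_forall_of_eventually (P := fun n k ↦ ∀ x ∈ s n, ‖f k x‖ < u n) fun n ↦ ?_
  filter_upwards [Metric.tendstoUniformlyOn_iff.1 (hf n) (u n) (hu n)] with k hk x hx
  simpa only [Pi.zero_apply, dist_zero_left] using hk x hx

variable [TopologicalSpace X] [NormedAddCommGroup E] [CompleteSpace E]

lemma tendstoLocallyUniformly_tsum_nat_of_forall_exists_nhds {g : ℕ → X → E} {u : ℕ → ℝ}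
    (hu : Summable u) (hg : ∀ x, ∃ U ∈ 𝓝 x, ∀ᶠ n in atTop, ∀ y ∈ U, ‖g n y‖ ≤ u n) :
    TendstoLocallyUniformly (fun N x ↦ ∑ n ∈ Finset.range N, g n x) (fun x ↦ ∑' n, g n x) atTop :=
  tendstoLocallyUniformly_of_forall_exists_nhds fun x ↦
    (hg x).imp fun _ ⟨hU, hgU⟩ ↦ ⟨hU, tendstoUniformlyOn_tsum_nat_eventually hu hgU⟩

lemma summable_of_exists_nhds_eventually_norm_le {g : ℕ → X → E} {u : ℕ → ℝ} {x : X}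
    (hu : Summable u) (hg : ∃ U ∈ 𝓝 x, ∀ᶠ n in atTop, ∀ y ∈ U, ‖g n y‖ ≤ u n) :
    Summable fun n ↦ g n x := by
  obtain ⟨U, hU, hgU⟩ := hg
  exact .of_norm_bounded_eventually_nat hu (hgU.mono fun _ hn ↦ hn x (mem_of_mem_nhds hU))

end Series

lemma tendsto_tsum_atTop_of_forall_eventually_le {ι X : Type*} [Infinite ι] {l : Filter X}
    {g : ι → X → ℝ} {c : ℝ} (hc : 0 < c) (hnonneg : ∀ i x, 0 ≤ g i x)
    (hsum : ∀ x, Summable fun i ↦ g i x) (hle : ∀ i, ∀ᶠ x in l, c ≤ g i x) :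
    Tendsto (fun x ↦ ∑' i, g i x) l atTop := by
  refine tendsto_atTop.2 fun b ↦ ?_
  obtain ⟨N, hN⟩ := Archimedean.arch b hc
  obtain ⟨s, rfl⟩ := Infinite.exists_subset_card_eq ι N
  filter_upwards [(Finset.eventually_all s).2 fun i _ ↦ hle i] with x hx
  calc
    b ≤ s.card • c := hN
    _ ≤ ∑ i ∈ s, g i x := s.card_nsmul_le_sum _ c hx
    _ ≤ ∑' i, g i x := (hsum x).sum_le_tsum s fun i _ ↦ hnonneg i x

section Extraction

variable {X : Type*} [TopologicalSpace X] {f : ℕ → X → ℝ} {c : ℝ}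

lemma exists_nhds_eventually_subset_of_antitone {K : ℕ → Set X} {x : X} {j : ℕ}
    (hcont : Continuous (f j)) (hanti : Antitone f) (hK : ∀ n, ∀ y ∉ K n, c ≤ f n y)
    (hx : f j x < c) : ∃ U ∈ 𝓝 x, ∀ᶠ n in atTop, U ⊆ K n := by
  refine ⟨{y | f j y < c}, (isOpen_lt hcont continuous_const).mem_nhds hx, ?_⟩
  filter_upwards [eventually_ge_atTop j] with n hn y hy
  by_contra hyK
  exact ((hK n y hyK).trans (hanti hn y)).not_gt hy

lemma exists_strictMono_forall_exists_nhds_norm_le_of_antitone {u : ℕ → ℝ} (hu : ∀ n, 0 < u n)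
    (hcont : ∀ m, Continuous (f m)) (hanti : Antitone f)
    (hlim : ∀ x, Tendsto (fun m ↦ f m x) atTop (𝓝 0)) (hc : 0 < c)
    (hout : ∀ m, ∀ᶠ x in cocompact X, c ≤ f m x) :
    ∃ m : ℕ → ℕ, StrictMono m ∧
      ∀ x, ∃ U ∈ 𝓝 x, ∀ᶠ n in atTop, ∀ y ∈ U, ‖f (m n) y‖ ≤ u n := by
  choose K hKcompact hK using fun m ↦ mem_cocompact.1 (hout m)
  have hdini (n : ℕ) : TendstoUniformlyOn f 0 atTop (K n) :=
    Antitone.tendstoUniformlyOn_of_forall_tendsto (hKcompact n) (fun m ↦ (hcont m).continuousOn)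
      (fun x _ _ _ hij ↦ hanti hij x) continuousOn_const fun x _ ↦ hlim x
  obtain ⟨m, hm, hsmall⟩ := exists_strictMono_forall_norm_lt_of_tendstoUniformlyOn_zero hu hdini
  refine ⟨m, hm, fun x ↦ ?_⟩
  obtain ⟨j, hj⟩ := ((hlim x).eventually_lt_const hc).exists
  obtain ⟨U, hU, hUK⟩ := exists_nhds_eventually_subset_of_antitone (hcont j) hanti hK hj
  exact ⟨U, hU, hUK.mono fun n hn y hy ↦ (hsmall n y (hn hy)).le⟩

theorem exists_subsequence_series_proper_general
    (hcont : ∀ m, Continuous (f m)) (hanti : Antitone f)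
    (hlim : ∀ x, Tendsto (fun m ↦ f m x) atTop (𝓝 0)) (hc : 0 < c)
    (hout : ∀ m, ∀ᶠ x in cocompact X, c ≤ f m x) :
    ∃ m : ℕ → ℕ, StrictMono m ∧
      TendstoLocallyUniformly (fun N x ↦ ∑ k ∈ Finset.range N, f (m k) x)
        (fun x ↦ ∑' k, f (m k) x) atTop ∧
      Continuous (fun x ↦ ∑' k, f (m k) x) ∧
      Tendsto (fun x ↦ ∑' k, f (m k) x) (cocompact X) atTop := by
  have hnonneg (m : ℕ) (x : X) : 0 ≤ f m x :=
    Antitone.le_of_tendsto (fun _ _ hij ↦ hanti hij x) (hlim x) m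
  obtain ⟨m, hm, hbound⟩ := exists_strictMono_forall_exists_nhds_norm_le_of_antitone
    (fun n ↦ by positivity : ∀ n, (0 : ℝ) < (1 / 2) ^ n) hcont hanti hlim hc hout
  have hconv := tendstoLocallyUniformly_tsum_nat_of_forall_exists_nhds (g := fun n ↦ f (m n))
    summable_geometric_two hbound
  have hsum (x : X) : Summable fun n ↦ f (m n) x :=
    summable_of_exists_nhds_eventually_norm_le summable_geometric_two (hbound x)
  refine ⟨m, hm, hconv, hconv.continuous (.of_forall fun N ↦ ?_), ?_⟩
  · exact continuous_finsetSum _ fun k _ ↦ hcont (m k)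
  · exact tendsto_tsum_atTop_of_forall_eventually_le hc (fun k ↦ hnonneg (m k)) hsum
      fun k ↦ hout (m k)

end Extraction

/-- The extraction argument used in the paper to build a continuous proper exhaustion
function on a `p`-parabolic manifold: from a pointwise decreasing sequence of continuous
functions `0 ≤ f_{m+1} ≤ f_m ≤ 1` converging pointwise to `0`, each equal to `1` outside
a compact set, one can extract a subsequence whose series converges locally uniformly to
a continuous function tending to `+∞` along the cocompact filter. -/
theorem exists_subsequence_series_proper
    (X : Type*) [TopologicalSpace X] [LocallyCompactSpace X] [SigmaCompactSpace X]
    [T2Space X]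
    (f : ℕ → X → ℝ) (hcont : ∀ m, Continuous (f m))
    (hnonneg : ∀ m x, 0 ≤ f m x)
    (hdecr : ∀ m x, f (m + 1) x ≤ f m x)
    (hle1 : ∀ m x, f m x ≤ 1)
    (hlim : ∀ x, Tendsto (fun m => f m x) atTop (𝓝 0))
    (hout : ∀ m, ∃ K : Set X, IsCompact K ∧ ∀ x ∉ K, f m x = 1) :
    ∃ m : ℕ → ℕ, StrictMono m ∧
      TendstoLocallyUniformly (fun N x => ∑ k ∈ Finset.range N, f (m k) x)
        (fun x => ∑' k, f (m k) x) atTop ∧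
      Continuous (fun x => ∑' k, f (m k) x) ∧
      Tendsto (fun x => ∑' k, f (m k) x) (cocompact X) atTop := by
  refine exists_subsequence_series_proper_general hcont (antitone_nat_of_succ_le hdecr) hlim one_pos
    fun m ↦ mem_cocompact.2 ?_
  exact (hout m).imp fun K ⟨hK, hf⟩ ↦ ⟨hK, fun x hx ↦ (hf x hx).ge⟩
end
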